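/- arXiv:1104.4416 — 2 statements merged into one kernel-verified Lean document; each statement's English description precedes it below -/
import Mathlib

section
/- Suppose q = 2 and that 𝒯 contains no triple of the form (x,x,x). Then ε = 0 in A_𝒯. -/
/-- A triangle presentation compatible with the bijection `lam : P ≃ L`:
a set of triples satisfying conditions (i), (ii), (iii). -/
structure IsTrianglePresentation {P L : Type*} [Membership P L]
    (lam : P ≃ L) (T : Set (P × P × P)) : Prop where
  exists_iff : ∀ x y : P, (∃ z : P, (x, y, z) ∈ T) ↔ y ∈ lam x
  cyclic : ∀ x y z : P, (x, y, z) ∈ T → (y, z, x) ∈ T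
  unique : ∀ x y z z' : P, (x, y, z) ∈ T → (x, y, z') ∈ T → z = z'

open Classical in
/-- Relators of `A_𝒯`: generators are the points of `P` plus one extra generator
`ε` (encoded as `none : Option P`). -/
def triangleRels {P L : Type*} [Fintype P] [Membership P L]
    (lam : P ≃ L) (T : Set (P × P × P)) : Set (FreeAbelianGroup (Option P)) :=
  (Set.range fun x : P =>
      (∑ y ∈ Finset.univ.filter fun y : P => ¬ y ∈ lam x, FreeAbelianGroup.of (some y))
        - FreeAbelianGroup.of (some x)) ∪
  ((fun t : P × P × P =>
      FreeAbelianGroup.of (some t.1) + FreeAbelianGroup.of (some t.2.1)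
        + FreeAbelianGroup.of (some t.2.2) - FreeAbelianGroup.of (none : Option P)) '' T) ∪
  {(∑ x : P, FreeAbelianGroup.of (some x)) - FreeAbelianGroup.of (none : Option P)}

/-- The abelian group `A_𝒯`, presented by generators `P ∪ {ε}` and the relations above. -/
abbrev TriangleGroup {P L : Type*} [Fintype P] [Membership P L]
    (lam : P ≃ L) (T : Set (P × P × P)) : Type _ :=
  FreeAbelianGroup (Option P) ⧸ AddSubgroup.closure (triangleRels lam T)

/-- The image in `A_𝒯` of the generator corresponding to a point `x ∈ P`. -/
def triangleGen {P L : Type*} [Fintype P] [Membership P L]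
    (lam : P ≃ L) (T : Set (P × P × P)) (x : P) : TriangleGroup lam T :=
  QuotientAddGroup.mk (FreeAbelianGroup.of (some x))

/-- The image in `A_𝒯` of the generator `ε`. -/
def triangleEps {P L : Type*} [Fintype P] [Membership P L]
    (lam : P ≃ L) (T : Set (P × P × P)) : TriangleGroup lam T :=
  QuotientAddGroup.mk (FreeAbelianGroup.of (none : Option P))

/-!
Write `q` for the order of the plane. Summing the first family of relations over all `x` counts each
point once for every line avoiding it, so `ε = q² ε`. Each point occurs as first entry of `q + 1`
triples of `𝒯`, so summing first entries over `𝒯` gives `(q + 1) ε`; if no triple is fixed by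
rotation, grouping the triples into rotation orbits shows that the same sum is `(#𝒯 / 3) ε` with
`#𝒯 = (q + 1)(q² + q + 1)`. When `q ≡ 2 [MOD 3]`, comparing the two leaves `((q² - 1) / 3) ε = 0`.
-/

open Configuration.ProjectivePlane Finset Function

theorem sum_eq_card_div_nsmul_of_minimalPeriod_eq {α M : Type*} [AddCommMonoid M] {f : α → α}
    {k : ℕ} (hk : 0 < k) {g : α → M} {e : M} (s : Finset α) (hmaps : Set.MapsTo f s s)
    (hper : ∀ a ∈ s, minimalPeriod f a = k) (hsum : ∀ a ∈ s, ∑ i ∈ range k, g (f^[i] a) = e) :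
    ∑ a ∈ s, g a = (#s / k) • e := by
  classical
  induction s using Finset.strongInduction with
  | H s ih =>
    obtain rfl | ⟨a, ha⟩ := s.eq_empty_or_nonempty
    · simp
    let orbit : Finset α := (range k).image fun i => f^[i] a
    have inj : Set.InjOn (fun i => f^[i] a) (range k) := by
      simpa [hper a ha, Set.Iio_def] using iterate_injOn_Iio_minimalPeriod (f := f) (x := a)
    have mem_orbit (n : ℕ) : f^[n] a ∈ orbit :=
      mem_image.2 ⟨n % k, mem_range.2 (n.mod_lt hk), by
        simpa only [hper a ha] using iterate_mod_minimalPeriod_eq (f := f) (x := a) (n := n)⟩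
    have orbit_subset : orbit ⊆ s := image_subset_iff.2 fun i _ => hmaps.iterate i ha
    have card_orbit : #orbit = k := by rw [card_image_of_injOn inj, card_range]
    have maps_sdiff : Set.MapsTo f ↑(s \ orbit) ↑(s \ orbit) := by
      intro b hb
      obtain ⟨hbs, hbo⟩ := mem_sdiff.1 hb
      refine mem_sdiff.2 ⟨hmaps hbs, fun hfb => hbo ?_⟩
      obtain ⟨i, -, hi⟩ := mem_image.1 hfb
      have hb_eq : f^[k - 1 + i] a = b := by
        rw [iterate_add_apply, hi, ← iterate_succ_apply, Nat.succ_eq_add_one,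
          Nat.sub_add_cancel hk, ← hper b hbs, iterate_minimalPeriod]
      exact hb_eq ▸ mem_orbit _
    have ih_sdiff := ih (s \ orbit) (sdiff_ssubset orbit_subset ⟨a, mem_orbit 0⟩) maps_sdiff
      (fun b hb => hper b (mem_sdiff.1 hb).1) fun b hb => hsum b (mem_sdiff.1 hb).1
    rw [← sum_sdiff orbit_subset, ih_sdiff, sum_image inj, hsum a ha,
      ← card_sdiff_add_card_eq_card orbit_subset, card_orbit, Nat.add_div_right _ hk, succ_nsmul]

theorem sq_sub_one_div_three_nsmul_eq_zero {G : Type*} [AddCommGroup G] {e : G} {q : ℕ}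
    (hq : q % 3 = 2) (q_sq_nsmul : q ^ 2 • e = e)
    (q_add_one_nsmul : (q + 1) • e = ((q + 1) * (q ^ 2 + q + 1) / 3) • e) :
    ((q ^ 2 - 1) / 3) • e = 0 := by
  obtain ⟨k, rfl⟩ : ∃ k, q = 3 * k + 2 := ⟨q / 3, by lia⟩
  have sq_sub_one_div : ((3 * k + 2) ^ 2 - 1) / 3 = (k + 1) * (3 * k + 1) := by
    rw [show (3 * k + 2) ^ 2 = 3 * ((k + 1) * (3 * k + 1)) + 1 by ring, Nat.add_sub_cancel,
      Nat.mul_div_cancel_left _ three_pos]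
  have mul_div : (3 * k + 2 + 1) * ((3 * k + 2) ^ 2 + (3 * k + 2) + 1) / 3 =
      (k + 1) * ((3 * k + 2) ^ 2 + (3 * k + 2) + 1) := by
    rw [show 3 * k + 2 + 1 = 3 * (k + 1) by ring, mul_assoc, Nat.mul_div_cancel_left _ three_pos]
  rw [mul_div] at q_add_one_nsmul
  rw [sq_sub_one_div]
  -- With `a = (k + 1) * (3 * k + 1)` the hypotheses say that `3 * a` and `(3 * k + 4) * a`
  -- kill `e`, and `a = (3 * k + 4) * a - (k + 1) * (3 * a)`.
  linear_combination (norm := module) (-(k + 1) : ℤ) • q_sq_nsmul - q_add_one_nsmul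

section Incidence

variable {P L : Type*} [Fintype P] [Membership P L] [Configuration.ProjectivePlane P L]

open Classical in
theorem card_filter_mem_eq_order_add_one [Finite L] (l : L) : #{y : P | y ∈ l} = order P L + 1 := by
  rw [← pointCount_eq P l, Configuration.pointCount, Nat.card_eq_fintype_card, Fintype.card_subtype]

open Classical in
theorem card_filter_notMem_equiv_eq_order_sq (lam : P ≃ L) (y : P) :
    #{x : P | y ∉ lam x} = order P L ^ 2 := by
  have : Finite L := Finite.of_equiv P lam
  have card_mem : #{x : P | y ∈ lam x} = order P L + 1 := by
    rw [← lineCount_eq L y, Configuration.lineCount, ← Fintype.card_subtype,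
      ← Nat.card_eq_fintype_card]
    exact Nat.card_congr (lam.subtypeEquiv fun _ => Iff.rfl)
  have card_add := card_filter_add_card_filter_not (s := (univ : Finset P)) (y ∈ lam ·)
  rw [card_mem, card_univ, card_points P L] at card_add
  lia

end Incidence

/-- Cyclic rotation `(x, y, z) ↦ (y, z, x)`, under which triangle presentations are invariant. -/
def rotateTriple {P : Type*} (t : P × P × P) : P × P × P := (t.2.1, t.2.2, t.1)

theorem minimalPeriod_rotateTriple {P : Type*} {t : P × P × P} (ht : t ≠ (t.1, t.1, t.1)) :
    minimalPeriod rotateTriple t = 3 := by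
  refine minimalPeriod_eq_prime rfl fun hfix => ht ?_
  obtain ⟨x, y, z⟩ := t
  simp only [IsFixedPt, rotateTriple, Prod.mk.injEq] at hfix
  obtain ⟨rfl, rfl, -⟩ := hfix
  rfl

namespace IsTrianglePresentation

variable {P L : Type*} [Fintype P] [Membership P L] {lam : P ≃ L} {T : Set (P × P × P)}

open Classical in
theorem card_filter_fst_eq (hT : IsTrianglePresentation lam T) (x : P) :
    #{t ∈ T.toFinset | t.1 = x} = #{y : P | y ∈ lam x} := by
  refine card_bij (fun t _ => t.2.1) ?_ ?_ ?_
  · rintro ⟨a, b, c⟩ h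
    simp only [mem_filter, Set.mem_toFinset, mem_univ, true_and] at h ⊢
    obtain ⟨h, rfl⟩ := h
    exact (hT.exists_iff a b).1 ⟨c, h⟩
  · rintro ⟨a, b, c⟩ h ⟨a', b', c'⟩ h' hb
    simp only [mem_filter, Set.mem_toFinset] at h h' hb
    obtain ⟨h, rfl⟩ := h
    obtain ⟨h', rfl⟩ := h'
    subst hb
    rw [hT.unique _ _ _ _ h h']
  · intro y hy
    obtain ⟨z, hz⟩ := (hT.exists_iff x y).2 (mem_filter.1 hy).2
    exact ⟨(x, y, z), by simpa using hz, rfl⟩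

variable [Configuration.ProjectivePlane P L]

open Classical in
theorem sum_fst {M : Type*} [AddCommMonoid M] (hT : IsTrianglePresentation lam T) (g : P → M) :
    ∑ t ∈ T.toFinset, g t.1 = (order P L + 1) • ∑ x, g x := by
  have : Finite L := Finite.of_equiv P lam
  have sum_fiber (x : P) : ∑ t ∈ T.toFinset with t.1 = x, g t.1 = (order P L + 1) • g x := by
    rw [sum_congr rfl fun t ht => congrArg g (mem_filter.1 ht).2, sum_const,
      hT.card_filter_fst_eq, card_filter_mem_eq_order_add_one]
  rw [← sum_fiberwise T.toFinset Prod.fst, smul_sum]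
  exact sum_congr rfl fun x _ => sum_fiber x

open Classical in
theorem card_toFinset (hT : IsTrianglePresentation lam T) :
    #T.toFinset = (order P L + 1) * (order P L ^ 2 + order P L + 1) := by
  have : Finite L := Finite.of_equiv P lam
  rw [card_eq_sum_ones, hT.sum_fst fun _ => 1, ← card_eq_sum_ones, card_univ, card_points P L,
    smul_eq_mul]

end IsTrianglePresentation

section TriangleGroup

variable {P L : Type*} [Fintype P] [Membership P L] (lam : P ≃ L) (T : Set (P × P × P))

open Classical in
theorem sum_triangleGen_notMem (x : P) :
    ∑ y with y ∉ lam x, triangleGen lam T y = triangleGen lam T x := by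
  have hrel := (QuotientAddGroup.eq_zero_iff _).2 <|
    AddSubgroup.subset_closure (k := triangleRels lam T) (Or.inl (Or.inl ⟨x, rfl⟩))
  rwa [QuotientAddGroup.mk_sub, sub_eq_zero, QuotientAddGroup.mk_sum] at hrel

theorem sum_triangleGen : ∑ x, triangleGen lam T x = triangleEps lam T := by
  have hrel := (QuotientAddGroup.eq_zero_iff _).2 <|
    AddSubgroup.subset_closure (k := triangleRels lam T) (Or.inr rfl)
  rwa [QuotientAddGroup.mk_sub, sub_eq_zero, QuotientAddGroup.mk_sum] at hrel

variable {T} in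
theorem triangleGen_add_add_eq_triangleEps {x y z : P} (h : (x, y, z) ∈ T) :
    triangleGen lam T x + triangleGen lam T y + triangleGen lam T z = triangleEps lam T := by
  have hrel := (QuotientAddGroup.eq_zero_iff _).2 <|
    AddSubgroup.subset_closure (k := triangleRels lam T) (Or.inl (Or.inr ⟨_, h, rfl⟩))
  rwa [QuotientAddGroup.mk_sub, sub_eq_zero] at hrel

variable [Configuration.ProjectivePlane P L]

theorem order_sq_nsmul_triangleEps : order P L ^ 2 • triangleEps lam T = triangleEps lam T := by
  classical
  calc order P L ^ 2 • triangleEps lam T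
      = ∑ y, ∑ x with y ∉ lam x, triangleGen lam T y := by
        simp only [sum_const, card_filter_notMem_equiv_eq_order_sq, ← smul_sum, sum_triangleGen]
    _ = ∑ x, ∑ y with y ∉ lam x, triangleGen lam T y := sum_comm' (by simp)
    _ = triangleEps lam T := by simp only [sum_triangleGen_notMem, sum_triangleGen]

variable {lam T}

theorem order_add_one_nsmul_triangleEps (hT : IsTrianglePresentation lam T)
    (hnd : ∀ x : P, (x, x, x) ∉ T) :
    (order P L + 1) • triangleEps lam T =
      ((order P L + 1) * (order P L ^ 2 + order P L + 1) / 3) • triangleEps lam T := by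
  classical
  rw [← hT.card_toFinset]
  nth_rw 1 [← sum_triangleGen]
  rw [← hT.sum_fst]
  refine sum_eq_card_div_nsmul_of_minimalPeriod_eq (f := rotateTriple) (k := 3) three_pos _ ?_ ?_ ?_
  · rintro ⟨x, y, z⟩ h
    simpa [rotateTriple] using hT.cyclic x y z (by simpa using h)
  · intro t ht
    exact minimalPeriod_rotateTriple fun hdiag => hnd t.1 (hdiag ▸ Set.mem_toFinset.1 ht)
  · rintro ⟨x, y, z⟩ h
    simpa [sum_range_succ, rotateTriple] using
      triangleGen_add_add_eq_triangleEps lam (Set.mem_toFinset.1 h)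

theorem stmt9_general (hT : IsTrianglePresentation lam T) (hq : order P L % 3 = 2)
    (hnd : ∀ x : P, (x, x, x) ∉ T) :
    ((order P L ^ 2 - 1) / 3) • triangleEps lam T = 0 :=
  sq_sub_one_div_three_nsmul_eq_zero hq (order_sq_nsmul_triangleEps lam T)
    (order_add_one_nsmul_triangleEps hT hnd)

end TriangleGroup

open Classical in
theorem stmt9 {P L : Type*} [Fintype P] [Fintype L] [Membership P L]
    [Configuration.ProjectivePlane P L] (q : ℕ) (hq : 2 ≤ q)
    (horder : Configuration.ProjectivePlane.order P L = q)
    (lam : P ≃ L) (T : Set (P × P × P)) (hT : IsTrianglePresentation lam T)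
    (hq2 : q = 2) (hnd : ∀ x : P, (x, x, x) ∉ T) :
    triangleEps lam T = 0 := by
  subst hq2
  simpa [horder] using stmt9_general hT (by rw [horder]) hnd
end

section
/- Let q = 4, let K be a finite field with 4 elements and L a field extension of K of degree 3 (so L has 64 elements). Then ε = 0 in the abelian group A_{𝒯₀}. -/
/-- The image of `Kˣ` in `Fˣ`, as a subgroup of `Fˣ`. -/
def baseUnits (K F : Type*) [Field K] [Field F] [Algebra K F] : Subgroup Fˣ :=
  (Units.map (algebraMap K F).toMonoidHom).range

/-- The quotient group `P = Fˣ/Kˣ`. -/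
abbrev ProjPts (K F : Type*) [Field K] [Field F] [Algebra K F] : Type _ :=
  Fˣ ⧸ baseUnits K F

/-- The class in `P = Fˣ/Kˣ` of a unit `x ∈ Fˣ`. -/
def pbar {K F : Type*} [Field K] [Field F] [Algebra K F] (x : Fˣ) : ProjPts K F :=
  QuotientGroup.mk x

/-- The triangle presentation of Tits type:
`𝒯₀ = {(x̄, x̄·ξ̄, x̄·ξ̄^(q+1)) : x, ξ ∈ Fˣ, Tr(ξ) = 0}`. -/
def titsT0 (q : ℕ) (K F : Type*) [Field K] [Field F] [Algebra K F] :
    Set (ProjPts K F × ProjPts K F × ProjPts K F) :=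
  {t | ∃ x ξ : Fˣ, Algebra.trace K F (ξ : F) = 0 ∧
        t = (pbar x, pbar x * pbar ξ, pbar x * pbar ξ ^ (q + 1))}

/-- Incidence for the point-line correspondence `λ₀`: the class `b` lies on the line
`λ₀(a)`, i.e. `Tr(y/x) = 0` for representatives `x, y`. -/
def titsInc {K F : Type*} [Field K] [Field F] [Algebra K F] (a b : ProjPts K F) : Prop :=
  ∃ x y : Fˣ, pbar x = a ∧ pbar y = b ∧ Algebra.trace K F ((y / x : Fˣ) : F) = 0

open Classical in
/-- The relators of the abelian group `A_𝒯₀`: generators are the elements of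
`P = Fˣ/Kˣ` plus one extra generator `ε` (encoded as `none`). -/
noncomputable def titsRels (q : ℕ) (K F : Type*) [Field K] [Field F] [Algebra K F]
    [Fintype F] : Set (FreeAbelianGroup (Option (ProjPts K F))) :=
  letI : Fintype (ProjPts K F) := Fintype.ofFinite _
  (Set.range fun a : ProjPts K F =>
      (∑ b ∈ Finset.univ.filter fun b : ProjPts K F => ¬ titsInc a b,
          FreeAbelianGroup.of (some b)) - FreeAbelianGroup.of (some a)) ∪
  ((fun t : ProjPts K F × ProjPts K F × ProjPts K F =>
      FreeAbelianGroup.of (some t.1) + FreeAbelianGroup.of (some t.2.1)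
        + FreeAbelianGroup.of (some t.2.2)
        - FreeAbelianGroup.of (none : Option (ProjPts K F))) '' titsT0 q K F) ∪
  {(∑ a : ProjPts K F, FreeAbelianGroup.of (some a))
      - FreeAbelianGroup.of (none : Option (ProjPts K F))}

/-- The abelian group `A_𝒯₀`. -/
abbrev TitsGroup (q : ℕ) (K F : Type*) [Field K] [Field F] [Algebra K F] [Fintype F] :
    Type _ :=
  FreeAbelianGroup (Option (ProjPts K F)) ⧸ AddSubgroup.closure (titsRels q K F)

/-- The image of the generator `ε` in `A_𝒯₀`. -/
noncomputable def titsEps (q : ℕ) (K F : Type*) [Field K] [Field F] [Algebra K F]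
    [Fintype F] : TitsGroup q K F :=
  QuotientAddGroup.mk (FreeAbelianGroup.of (none : Option (ProjPts K F)))

/-!
The set `D ⊆ P` of classes of trace-zero elements is stable under squaring because
`Tr (x ^ 2) = Tr x ^ 2`, it does not contain `1` because `Tr 1 = 3 ≠ 0`, and it has `5` elements.
The group `P` has order `21`, and the orbit under squaring of an element of order `3`, `7` or `21`
has `2`, `3` or `6` elements, so `D = {v, v², w, w², w⁴}` with `v` of order `3` and `w` of order
`7`; both occur because `5` is divisible by neither `2` nor `3`. The line relation at `a` now reads
`a + (a v + a v²) + (a w + a w² + a w⁴) = ε`, and the triangle relation attached to `v` is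
`a + a v + a v² = ε` because `v⁵ = v²`. Hence `a w + a w² + a w⁴ = 0` for all `a`.
Summing this over `P` gives `3ε = 0`; summing it and the triangle relation
`a + a w + a w⁵ = ε` over the subgroup generated by `w` gives `7ε = 0`.
-/

open Finset

theorem card_nsmul_sum_eq_card_nsmul {G A ι : Type*} [Group G] [Fintype G] [AddCommMonoid A]
    (s : Finset ι) (g : ι → G) {f : G → A} {c : A} (h : ∀ a, ∑ i ∈ s, f (a * g i) = c) :
    #s • ∑ a, f a = Fintype.card G • c :=
  calc #s • ∑ a, f a = ∑ i ∈ s, ∑ a, f a := by rw [sum_const]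
    _ = ∑ i ∈ s, ∑ a, f (a * g i) :=
        sum_congr rfl fun i _ => (Equiv.sum_comp (Equiv.mulRight (g i)) f).symm
    _ = ∑ _ : G, c := by rw [sum_comm]; simp only [h]
    _ = Fintype.card G • c := by rw [sum_const, card_univ]

theorem prime_dvd_card_of_iterate_eq {α : Type*} {s : Finset α} {f : α → α} {p : ℕ}
    [Fact p.Prime] (hf : Set.MapsTo f s s) (hfp : ∀ x ∈ s, f^[p] x = x)
    (hfix : ∀ x ∈ s, f x ≠ x) : p ∣ #s := by
  classical
  let φ : Function.End s := hf.restrict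
  have hφ : φ ^ p ^ 1 = 1 := by
    funext x
    rw [pow_one]
    refine Subtype.ext ?_
    change ((hf.restrict f s s)^[p] x : α) = x
    rw [hf.iterate_restrict, Set.MapsTo.val_restrict_apply, hfp x x.2]
  have hempty : IsEmpty (Function.fixedPoints φ) :=
    ⟨fun ⟨x, hx⟩ => hfix x x.2 (congrArg Subtype.val hx)⟩
  have hmod := Equiv.Perm.card_fixedPoints_modEq hφ
  rw [Fintype.card_coe, Fintype.card_eq_zero] at hmod
  exact (Nat.modEq_zero_iff_dvd).1 hmod

section SquaringOrbit

variable {G : Type*} [Group G]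

theorem injOn_pow_two_pow (x : G) :
    Set.InjOn (fun i => x ^ 2 ^ i) (Set.Iio (orderOf (2 : ZMod (orderOf x)))) := by
  intro i hi j hj hij
  have hmod : ((2 ^ i : ℕ) : ZMod (orderOf x)) = (2 ^ j : ℕ) :=
    (ZMod.natCast_eq_natCast_iff _ _ _).2 (pow_eq_pow_iff_modEq.1 hij)
  push_cast at hmod
  exact pow_injOn_Iio_orderOf hi hj hmod

variable [DecidableEq G]

/-- The orbit of an element `x` of odd order under squaring: the period of `i ↦ x ^ 2 ^ i` is the
multiplicative order of `2` modulo the order of `x`. If `x` has even or infinite order, this is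
empty, since then `2` is not a unit and `orderOf` takes the value `0`. -/
noncomputable def sqOrbit (x : G) : Finset G :=
  (range (orderOf (2 : ZMod (orderOf x)))).image fun i => x ^ 2 ^ i

theorem card_sqOrbit (x : G) : #(sqOrbit x) = orderOf (2 : ZMod (orderOf x)) := by
  rw [sqOrbit, card_image_of_injOn (by simpa using injOn_pow_two_pow x), card_range]

theorem sum_sqOrbit {A : Type*} [AddCommMonoid A] (x : G) (f : G → A) :
    ∑ y ∈ sqOrbit x, f y = ∑ i ∈ range (orderOf (2 : ZMod (orderOf x))), f (x ^ 2 ^ i) :=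
  sum_image (by simpa using injOn_pow_two_pow x)

theorem orderOf_eq_of_mem_sqOrbit {x y : G} (hx : Odd (orderOf x)) (hy : y ∈ sqOrbit x) :
    orderOf y = orderOf x := by
  obtain ⟨i, -, rfl⟩ := mem_image.1 hy
  exact (hx.coprime_two_right.pow_right i).orderOf_pow

theorem disjoint_sqOrbit {x y : G} (hx : Odd (orderOf x)) (hy : Odd (orderOf y))
    (hxy : orderOf x ≠ orderOf y) : Disjoint (sqOrbit x) (sqOrbit y) :=
  disjoint_left.2 fun _ hzx hzy =>
    hxy ((orderOf_eq_of_mem_sqOrbit hx hzx).symm.trans (orderOf_eq_of_mem_sqOrbit hy hzy))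

theorem sqOrbit_subset {D : Finset G} {x : G} (hsq : ∀ x ∈ D, x ^ 2 ∈ D) (hx : x ∈ D) :
    sqOrbit x ⊆ D := by
  refine image_subset_iff.2 fun i _ => ?_
  have hmaps : Set.MapsTo (fun y : G => y ^ 2) D D := hsq
  simpa only [pow_iterate, mem_coe] using hmaps.iterate i hx

end SquaringOrbit

theorem orderOf_two_zmod_three : orderOf (2 : ZMod 3) = 2 :=
  orderOf_eq_prime (by decide) (by decide)

theorem orderOf_two_zmod_seven : orderOf (2 : ZMod 7) = 3 :=
  orderOf_eq_prime (by decide) (by decide)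

theorem orderOf_two_zmod_twentyOne : orderOf (2 : ZMod 21) = 6 :=
  (orderOf_eq_iff (by decide)).2 (by decide)

section SquareStable

variable {G : Type*} [Group G] {D : Finset G}

theorem prime_dvd_card_of_sq_mem {p : ℕ} [Fact p.Prime] (hsq : ∀ x ∈ D, x ^ 2 ∈ D)
    (h1 : 1 ∉ D) (hp : ∀ x ∈ D, x ^ 2 ^ p = x) : p ∣ #D := by
  refine prime_dvd_card_of_iterate_eq (f := fun x : G => x ^ 2) hsq ?_ fun x hx hfix => ?_
  · simpa only [pow_iterate] using hp
  · have : x = 1 := by simpa [pow_two] using hfix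
    exact h1 (this ▸ hx)

theorem orderOf_eq_three_or_seven (h21 : ∀ x ∈ D, orderOf x ∣ 21)
    (hsq : ∀ x ∈ D, x ^ 2 ∈ D) (h1 : 1 ∉ D) (hD : #D = 5) {x : G} (hx : x ∈ D) :
    orderOf x = 3 ∨ orderOf x = 7 := by
  classical
  have hne1 : orderOf x ≠ 1 := fun h => h1 (orderOf_eq_one_iff.1 h ▸ hx)
  have hne21 : orderOf x ≠ 21 := by
    intro h
    have hcard := card_le_card (sqOrbit_subset hsq hx)
    rw [card_sqOrbit, h, orderOf_two_zmod_twentyOne, hD] at hcard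
    omega
  have hmem : orderOf x ∈ ({1, 3, 7, 21} : Finset ℕ) :=
    (by decide : Nat.divisors 21 = {1, 3, 7, 21}) ▸ Nat.mem_divisors.2 ⟨h21 x hx, by decide⟩
  simpa [hne1, hne21] using hmem

theorem exists_orderOf_eq_three_and_seven (h21 : ∀ x ∈ D, orderOf x ∣ 21)
    (hsq : ∀ x ∈ D, x ^ 2 ∈ D) (h1 : 1 ∉ D) (hD : #D = 5) :
    (∃ v ∈ D, orderOf v = 3) ∧ ∃ w ∈ D, orderOf w = 7 := by
  have hord := fun x (hx : x ∈ D) => orderOf_eq_three_or_seven h21 hsq h1 hD hx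
  constructor <;> by_contra! hne
  · have : 3 ∣ #D := prime_dvd_card_of_sq_mem hsq h1 fun x hx => by
      have hx7 : x ^ 7 = 1 := (hord x hx).resolve_left (hne x hx) ▸ pow_orderOf_eq_one x
      calc x ^ 2 ^ 3 = x ^ 7 * x := pow_succ x 7
        _ = x := by rw [hx7, one_mul]
    omega
  · have : 2 ∣ #D := prime_dvd_card_of_sq_mem hsq h1 fun x hx => by
      have hx3 : x ^ 3 = 1 := (hord x hx).resolve_right (hne x hx) ▸ pow_orderOf_eq_one x
      calc x ^ 2 ^ 2 = x ^ 3 * x := pow_succ x 3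
        _ = x := by rw [hx3, one_mul]
    omega

theorem exists_disjUnion_sqOrbit_eq [DecidableEq G] (h21 : ∀ x ∈ D, orderOf x ∣ 21)
    (hsq : ∀ x ∈ D, x ^ 2 ∈ D) (h1 : 1 ∉ D) (hD : #D = 5) :
    ∃ v ∈ D, ∃ w ∈ D, orderOf v = 3 ∧ orderOf w = 7 ∧
      ∃ hvw : Disjoint (sqOrbit v) (sqOrbit w), (sqOrbit v).disjUnion (sqOrbit w) hvw = D := by
  obtain ⟨⟨v, hvD, hv⟩, w, hwD, hw⟩ := exists_orderOf_eq_three_and_seven h21 hsq h1 hD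
  have hvw : Disjoint (sqOrbit v) (sqOrbit w) :=
    disjoint_sqOrbit (hv ▸ by decide) (hw ▸ by decide) (by omega)
  refine ⟨v, hvD, w, hwD, hv, hw, hvw, eq_of_subset_of_card_le ?_ ?_⟩
  · rw [disjUnion_eq_union]
    exact union_subset (sqOrbit_subset hsq hvD) (sqOrbit_subset hsq hwD)
  · rw [card_disjUnion, card_sqOrbit, card_sqOrbit, hv, hw, orderOf_two_zmod_three,
      orderOf_two_zmod_seven, hD]

end SquareStable

theorem eq_zero_of_line_and_triangle_relations {G A : Type*} [Group G] [Fintype G]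
    [AddCommGroup A] {f : G → A} {ε : A} {D : Finset G}
    (h21 : ∀ x ∈ D, orderOf x ∣ 21) (hsq : ∀ x ∈ D, x ^ 2 ∈ D) (h1 : 1 ∉ D) (hD : #D = 5)
    (hsum : ∑ a, f a = ε)
    (hline : ∀ a, f a + ∑ d ∈ D, f (a * d) = ε)
    (htri : ∀ a, ∀ d ∈ D, f a + f (a * d) + f (a * d ^ 5) = ε) : ε = 0 := by
  classical
  obtain ⟨v, hvD, w, hwD, hv, hw, hvw, rfl⟩ := exists_disjUnion_sqOrbit_eq h21 hsq h1 hD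
  have hv5 : v ^ 5 = v ^ 2 := pow_eq_pow_iff_modEq.2 (hv ▸ rfl)
  have hw_orbit (a : G) : ∑ i ∈ range 3, f (a * w ^ 2 ^ i) = 0 := by
    have hline' := hline a
    rw [sum_disjUnion, sum_sqOrbit v, sum_sqOrbit w, hv, hw, orderOf_two_zmod_three,
      orderOf_two_zmod_seven, sum_range_succ _ 1, sum_range_one, pow_zero, pow_one, pow_one,
      ← add_assoc, ← add_assoc, ← hv5, htri a v hvD] at hline'
    exact add_eq_left.1 hline'
  have h3ε : 3 • ε = 0 := by
    rw [← hsum, ← smul_zero (Fintype.card G)]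
    exact card_nsmul_sum_eq_card_nsmul (range 3) _ hw_orbit
  have hcardH : Fintype.card (Subgroup.zpowers w) = 7 := by rw [Fintype.card_zpowers, hw]
  let w' : Subgroup.zpowers w := ⟨w, Subgroup.mem_zpowers w⟩
  have h3S : 3 • ∑ a : Subgroup.zpowers w, f a = 0 := by
    rw [← smul_zero (Fintype.card (Subgroup.zpowers w))]
    exact card_nsmul_sum_eq_card_nsmul (range 3) (fun i => w' ^ 2 ^ i)
      (f := fun a => f a) fun a => hw_orbit a
  have h3S' : 3 • ∑ a : Subgroup.zpowers w, f a = 7 • ε := by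
    rw [← hcardH]
    refine card_nsmul_sum_eq_card_nsmul (univ : Finset (Fin 3)) ![1, w', w' ^ 5]
      (f := fun a => f a) fun a => ?_
    simpa [Fin.sum_univ_three, w'] using htri a w hwD
  calc ε = 7 • ε - 2 • (3 • ε) := by abel
    _ = 0 := by rw [← h3S', h3S, h3ε, smul_zero, sub_zero]

theorem trace_pow_expChar {K F : Type*} [Field K] [Field F] [Algebra K F]
    [FiniteDimensional K F] [IsGalois K F] (p : ℕ) [ExpChar K p] (x : F) :
    Algebra.trace K F (x ^ p) = Algebra.trace K F x ^ p := by
  have : ExpChar F p := expChar_of_injective_algebraMap (algebraMap K F).injective p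
  apply (algebraMap K F).injective
  simp only [map_pow, trace_eq_sum_automorphisms, sum_pow_char]

theorem ncard_units_mem_add_one {K F : Type*} [Field K] [Field F] [Algebra K F] [Finite F]
    (W : Submodule K F) : {ξ : Fˣ | (ξ : F) ∈ W}.ncard + 1 = Nat.card W := by
  have himage : Units.val '' {ξ : Fˣ | (ξ : F) ∈ W} = (W : Set F) \ {0} := by
    ext x
    constructor
    · rintro ⟨ξ, hξ, rfl⟩
      exact ⟨hξ, ξ.ne_zero⟩
    · rintro ⟨hx, hx0⟩
      exact ⟨Units.mk0 x hx0, hx, rfl⟩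
  rw [← Set.ncard_image_of_injective _ Units.val_injective, himage,
    Set.ncard_sdiff_singleton_add_one W.zero_mem, ← Nat.card_coe_set_eq]
  rfl

section Points

variable {K F : Type*} [Field K] [Field F] [Algebra K F]

theorem trace_eq_zero_iff_of_pbar_eq {x y : Fˣ} (h : pbar (K := K) x = pbar y) :
    Algebra.trace K F (x : F) = 0 ↔ Algebra.trace K F (y : F) = 0 := by
  obtain ⟨k, hk⟩ := QuotientGroup.eq.1 h
  have hy : (y : F) = (k : K) • (x : F) := by
    rw [eq_inv_mul_iff_mul_eq] at hk
    rw [← hk, mul_comm, Units.val_mul, Algebra.smul_def]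
    rfl
  rw [hy, map_smul, smul_eq_zero_iff_right k.ne_zero]

theorem card_baseUnits : Nat.card (baseUnits K F) = Nat.card K - 1 := by
  rw [← Nat.card_units]
  exact Nat.card_range_of_injective (Units.map_injective (algebraMap K F).injective)

theorem card_projPts_mul [Finite F] :
    Nat.card (ProjPts K F) * (Nat.card K - 1) + 1 = Nat.card F := by
  rw [← card_baseUnits (K := K) (F := F), ← Subgroup.card_eq_card_quotient_mul_card_subgroup,
    Nat.card_eq_card_units_add_one (α := F)]

variable [Finite F]

variable (K F) in
/-- The set `D ⊆ P` of classes of trace-zero units, i.e. the line `λ₀(1)`; as a `Finset`, since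
the defining relations of `A_𝒯₀` involve sums over it. -/
noncomputable def traceZeroPts : Finset (ProjPts K F) :=
  (Set.toFinite (pbar '' {ξ : Fˣ | Algebra.trace K F (ξ : F) = 0})).toFinset

theorem pbar_mem_traceZeroPts {ξ : Fˣ} :
    pbar ξ ∈ traceZeroPts K F ↔ Algebra.trace K F (ξ : F) = 0 := by
  rw [traceZeroPts, Set.Finite.mem_toFinset]
  exact ⟨fun ⟨_, hη, h⟩ => (trace_eq_zero_iff_of_pbar_eq h).1 hη, fun h => ⟨ξ, h, rfl⟩⟩

theorem titsInc_iff {a b : ProjPts K F} : titsInc a b ↔ a⁻¹ * b ∈ traceZeroPts K F := by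
  constructor
  · rintro ⟨x, y, rfl, rfl, h⟩
    rwa [← pbar_mem_traceZeroPts, div_eq_inv_mul] at h
  · obtain ⟨x, rfl⟩ := QuotientGroup.mk_surjective a
    obtain ⟨y, rfl⟩ := QuotientGroup.mk_surjective b
    intro h
    refine ⟨x, y, rfl, rfl, ?_⟩
    rwa [← pbar_mem_traceZeroPts, div_eq_inv_mul]

theorem one_notMem_traceZeroPts (h : (Module.finrank K F : K) ≠ 0) : 1 ∉ traceZeroPts K F := by
  change pbar 1 ∉ _
  rwa [pbar_mem_traceZeroPts, Units.val_one, ← map_one (algebraMap K F),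
    Algebra.trace_algebraMap, nsmul_one]

theorem pow_mem_traceZeroPts (p : ℕ) [ExpChar K p] {d : ProjPts K F} (hd : d ∈ traceZeroPts K F) :
    d ^ p ∈ traceZeroPts K F := by
  obtain ⟨ξ, rfl⟩ := QuotientGroup.mk_surjective d
  change pbar (ξ ^ p) ∈ _
  rw [pbar_mem_traceZeroPts, Units.val_pow_eq_pow_val, trace_pow_expChar,
    pbar_mem_traceZeroPts.1 hd, zero_pow (expChar_ne_zero K p)]

theorem card_traceZeroPts_mul :
    #(traceZeroPts K F) * (Nat.card K - 1) + 1 = Nat.card K ^ (Module.finrank K F - 1) := by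
  have hpreimage : {ξ : Fˣ | (ξ : F) ∈ (Algebra.trace K F).ker} =
      QuotientGroup.mk ⁻¹' (traceZeroPts K F : Set (ProjPts K F)) := by
    ext ξ
    exact pbar_mem_traceZeroPts.symm
  have hfinrank := Module.Dual.finrank_ker_add_one_of_ne_zero (Algebra.trace_ne_zero K F)
  rw [← hfinrank, Nat.add_sub_cancel, ← Module.natCard_eq_pow_finrank, ← ncard_units_mem_add_one,
    hpreimage, ← Nat.card_coe_set_eq,
    Nat.card_congr (QuotientGroup.preimageMkEquivSubgroupProdSet _ _), Nat.card_prod,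
    card_baseUnits, Nat.card_coe_set_eq, Set.ncard_coe_finset, mul_comm]

end Points

section TitsGroup

variable {q : ℕ} {K F : Type*} [Field K] [Field F] [Algebra K F] [Fintype F]

variable (q) in
/-- The image in `A_𝒯₀` of the generator attached to a point of `P`. -/
noncomputable def titsGen (a : ProjPts K F) : TitsGroup q K F :=
  QuotientAddGroup.mk (FreeAbelianGroup.of (some a))

theorem mk_eq_zero_of_mem_titsRels {r : FreeAbelianGroup (Option (ProjPts K F))}
    (hr : r ∈ titsRels q K F) :
    QuotientAddGroup.mk' (AddSubgroup.closure (titsRels q K F)) r = 0 :=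
  (QuotientAddGroup.eq_zero_iff r).2 (AddSubgroup.subset_closure hr)

theorem titsGen_triangle (a : ProjPts K F) {d : ProjPts K F} (hd : d ∈ traceZeroPts K F) :
    titsGen q a + titsGen q (a * d) + titsGen q (a * d ^ (q + 1)) = titsEps q K F := by
  obtain ⟨x, rfl⟩ := QuotientGroup.mk_surjective a
  obtain ⟨ξ, rfl⟩ := QuotientGroup.mk_surjective d
  have hrel := mk_eq_zero_of_mem_titsRels (q := q)
    (Or.inl (Or.inr ⟨_, ⟨x, ξ, pbar_mem_traceZeroPts.1 hd, rfl⟩, rfl⟩))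
  rw [map_sub, map_add, map_add, sub_eq_zero] at hrel
  exact hrel

theorem sum_titsGen [Fintype (ProjPts K F)] : ∑ a : ProjPts K F, titsGen q a = titsEps q K F := by
  have hrel := mk_eq_zero_of_mem_titsRels (q := q) (K := K) (F := F) (Or.inr rfl)
  rw [map_sub, map_sum, sub_eq_zero] at hrel
  convert hrel <;> rfl

open Classical in
theorem sum_titsGen_not_titsInc [Fintype (ProjPts K F)] (a : ProjPts K F) :
    ∑ b with ¬ titsInc a b, titsGen q b = titsGen q a := by
  have hrel := mk_eq_zero_of_mem_titsRels (q := q) (Or.inl (Or.inl ⟨a, rfl⟩))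
  rw [map_sub, map_sum, sub_eq_zero] at hrel
  convert hrel <;> rfl

theorem titsGen_line (a : ProjPts K F) :
    titsGen q a + ∑ d ∈ traceZeroPts K F, titsGen q (a * d) = titsEps q K F := by
  classical
  obtain ⟨_⟩ := nonempty_fintype (ProjPts K F)
  have hline : ∑ d ∈ traceZeroPts K F, titsGen q (a * d) =
      ∑ b with titsInc a b, titsGen q b :=
    sum_equiv (Equiv.mulLeft a) (by simp [titsInc_iff]) fun _ _ => rfl
  rw [hline, ← sum_titsGen, ← sum_filter_add_sum_filter_not univ (titsInc a),
    sum_titsGen_not_titsInc, add_comm]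

end TitsGroup

theorem stmt19 (K F : Type*) [Field K] [Field F] [Algebra K F] [Fintype K] [Fintype F]
    (hK : Fintype.card K = 4) (hd : Module.finrank K F = 3) :
    titsEps 4 K F = 0 := by
  have : Fintype (ProjPts K F) := Fintype.ofFinite _
  have : CharP K 2 := charP_of_card_eq_prime_pow (f := 2) hK
  rw [← Nat.card_eq_fintype_card] at hK
  have hcardF : Nat.card F = 64 := by
    rw [Module.natCard_eq_pow_finrank (K := K), hK, hd]
    norm_num
  have hcardP : Nat.card (ProjPts K F) = 21 := by
    have := card_projPts_mul (K := K) (F := F)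
    rw [hK, hcardF] at this
    omega
  have hcardD : #(traceZeroPts K F) = 5 := by
    have := card_traceZeroPts_mul (K := K) (F := F)
    rw [hK, hd] at this
    omega
  have hfinrank : (Module.finrank K F : K) ≠ 0 := by
    rw [hd, Ne, CharP.cast_eq_zero_iff K 2]
    decide
  exact eq_zero_of_line_and_triangle_relations (fun d _ => hcardP ▸ orderOf_dvd_natCard d)
    (fun _ => pow_mem_traceZeroPts 2) (one_notMem_traceZeroPts hfinrank) hcardD
    sum_titsGen titsGen_line fun a _ => titsGen_triangle a
end
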